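/- Let 𝒳, 𝒴, 𝒵 be finite sets, R > 0, and let P_{XYZ}, Q_{XYZ} be pmfs on 𝒳×𝒴×𝒵 with D(P_{XY}‖Q_{XY}) < ∞ and D(P_{XZ}‖Q_{XZ}) < ∞. Then E_{P_{XY},Q_{XY}}(R) ≤ G_{P_{XY},Q_{XY},P_{XZ},Q_{XZ}}(R) + E_{P_{XZ},Q_{XZ}}(R). -/

import Mathlib

open scoped BigOperators

noncomputable section

open Classical in
/-- Pushforward of a finitely supported mass function along a map. -/
def pushf {Ω α : Type*} [Fintype Ω] (p : Ω → ℝ) (f : Ω → α) : α → ℝ :=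
  fun a => ∑ ω, if f ω = a then p ω else 0

/-- `p` is a probability mass function. -/
def IsPMF {α : Type*} [Fintype α] (p : α → ℝ) : Prop :=
  (∀ a, 0 ≤ p a) ∧ ∑ a, p a = 1

/-- Kullback–Leibler divergence `D(p‖q)` of mass functions, valued in `EReal`
(equal to `⊤` if `p` is not absolutely continuous w.r.t. `q`). -/
def klDiv {α : Type*} [Fintype α] (p q : α → ℝ) : EReal :=
  if ∀ a, q a = 0 → p a = 0 then ((∑ a, p a * Real.log (p a / q a) : ℝ) : EReal) else ⊤

/-- Shannon entropy. -/
def entropy {α : Type*} [Fintype α] (p : α → ℝ) : ℝ :=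
  -∑ a, p a * Real.log (p a)

/-- Conditional mutual information `I(A;B|C)` under the mass function `p`. -/
def condMI {Ω α β γ : Type*} [Fintype Ω] [Fintype α] [Fintype β] [Fintype γ]
    (p : Ω → ℝ) (A : Ω → α) (B : Ω → β) (C : Ω → γ) : ℝ :=
  entropy (pushf p (fun ω => (A ω, C ω))) + entropy (pushf p (fun ω => (B ω, C ω)))
    - entropy (pushf p (fun ω => (A ω, B ω, C ω))) - entropy (pushf p C)

/-- First marginal of a joint mass function. -/
def margFst {α β : Type*} [Fintype α] [Fintype β] (p : α × β → ℝ) : α → ℝ :=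
  fun a => ∑ b, p (a, b)

/-- Conditional mass function of the second coordinate given the first. -/
def condSnd {α β : Type*} [Fintype α] [Fintype β] (p : α × β → ℝ) : α → β → ℝ :=
  fun a b => p (a, b) / margFst p a

/-- Output distribution of a channel on an input distribution. -/
def outDist {α β : Type*} [Fintype α] [Fintype β] (ch : α → β → ℝ) (pa : α → ℝ) : β → ℝ :=
  fun b => ∑ a, pa a * ch a b

/-- The difference functional
`f(P'_X) = sup_{Q̂_X ≪ Q_X} D(P'_Y‖Q̂_Y) − D(P'_Z‖Q̂_Z)`. -/
def fdiff {X Y Z : Type*} [Fintype X] [Fintype Y] [Fintype Z]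
    (pYgX : X → Y → ℝ) (pZgX : X → Z → ℝ) (qYgX : X → Y → ℝ) (qZgX : X → Z → ℝ)
    (qX : X → ℝ) (pX' : X → ℝ) : EReal :=
  sSup {d : EReal | ∃ qhX : X → ℝ, IsPMF qhX ∧ (∀ x, qX x = 0 → qhX x = 0) ∧
    d = klDiv (outDist pYgX pX') (outDist qYgX qhX)
        - klDiv (outDist pZgX pX') (outDist qZgX qhX)}

/-- The quantity `G_{P_XY, Q_XY, P_XZ, Q_XZ}(R)`: the supremum over finite sets `𝒰`
(represented by `Fin m`) and channels `P_{U|X}` with `I_P(U;X|Y) ≤ R` and `I_P(U;X|Z) ≤ R`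
of `∑_u P_U(u) f(P_{X|U}(·|u))`. -/
def Gexp {X Y Z : Type*} [Fintype X] [Fintype Y] [Fintype Z]
    (pXY : X × Y → ℝ) (qXY : X × Y → ℝ) (pXZ : X × Z → ℝ) (qXZ : X × Z → ℝ)
    (R : ℝ) : EReal :=
  sSup {v : EReal | ∃ (m : ℕ) (ch : X → Fin m → ℝ),
    (∀ x, IsPMF (ch x)) ∧
    condMI (fun w : Fin m × X × Y => ch w.2.1 w.1 * pXY (w.2.1, w.2.2))
      (fun w => w.1) (fun w => w.2.1) (fun w => w.2.2) ≤ R ∧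
    condMI (fun w : Fin m × X × Z => ch w.2.1 w.1 * pXZ (w.2.1, w.2.2))
      (fun w => w.1) (fun w => w.2.1) (fun w => w.2.2) ≤ R ∧
    v = ∑ u : Fin m,
      ((∑ x, ch x u * margFst pXY x : ℝ) : EReal) *
        fdiff (condSnd pXY) (condSnd pXZ) (condSnd qXY) (condSnd qXZ)
          (margFst qXY)
          (fun x => ch x u * margFst pXY x / ∑ x', ch x' u * margFst pXY x')}

/-- The error exponent of distributed hypothesis testing, via the Ahlswede–Csiszár
multi-letter characterization. -/
def errExp {X W : Type*} [Fintype X] [Fintype W]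
    (pXW qXW : X × W → ℝ) (R : ℝ) : EReal :=
  sSup {v : EReal | ∃ n : ℕ, 0 < n ∧
    ∃ κ : (Fin n → X) → Fin (2 ^ ⌊(n : ℝ) * R⌋₊) → ℝ,
      (∀ x, IsPMF (κ x)) ∧
      v = (((n : ℝ)⁻¹ : ℝ) : EReal) *
        klDiv
          (fun mw : Fin (2 ^ ⌊(n : ℝ) * R⌋₊) × (Fin n → W) =>
            ∑ x : Fin n → X, (∏ i, pXW (x i, mw.2 i)) * κ x mw.1)
          (fun mw : Fin (2 ^ ⌊(n : ℝ) * R⌋₊) × (Fin n → W) =>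
            ∑ x : Fin n → X, (∏ i, qXW (x i, mw.2 i)) * κ x mw.1)}

/-!
For an encoder with message `M`, add and subtract `D(P_{MZⁿ}‖Q_{MZⁿ})`: the second term is bounded
by `n E_{P_XZ,Q_XZ}(R)`, and `D(P_{MYⁿ}‖Q_{MYⁿ}) - D(P_{MZⁿ}‖Q_{MZⁿ})` must be bounded by `n G(R)`.
Replacing `Yⁿ` by `Zⁿ` one letter at a time, as in the Csiszár sum identity, turns it into a sum of
single-letter differences, one for each value of `U = (M, i, Yⁱ⁻¹, Zᵢ₊₁ⁿ)`. Each of them is at most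
`P_U(u) f(P_{X|U=u})`, the law of `Xᵢ` given `U = u` under `Q` being a candidate for `Q̂_X`.

The same telescoping gives the rate constraints. As `U - X - Y` is Markov, `I(U;X|Y)` is the sum
over `u` of the entropy gains `H(Y) - H(X)` from the laws `P_{X,U=u}`, minus the entropy gain from
`P_X`. The gains for all `u = (m, ⋯)` together are at most the block gain from `P_{Xⁿ,M=m}`, and
summed over `m` the block gains exceed that from `P_{Xⁿ}` by at most `H(M) ≤ n R`.

All laws are kept unnormalized (`P_{X,U=u}` rather than `P_{X|U=u}`): no division by probabilities
of `u`, which may vanish, occurs before the final comparison with `G`.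
-/

section

open Real

variable {ι M X Y Z : Type*}

/-- Absolute continuity `p ≪ q` of mass functions. -/
def AbsCont (p q : X → ℝ) : Prop :=
  ∀ x, q x = 0 → p x = 0

/-- The joint law of an input of law `p` and the output of the channel `a`. -/
def jointDist (p : X → ℝ) (a : X → Y → ℝ) : X × Y → ℝ :=
  fun w => p w.1 * a w.1 w.2

/-- The law of independent coordinates with marginals `p i`. -/
def piDist [Fintype ι] (p : ι → X → ℝ) : (ι → X) → ℝ :=
  fun x => ∏ i, p i (x i)

/-- The memoryless extension `aⁿ` of the channel `a`. -/
def blockChannel [Fintype ι] (a : X → Y → ℝ) : (ι → X) → (ι → Y) → ℝ :=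
  fun x => piDist fun i => a (x i)

/-- The joint law of an i.i.d. block with letters of law `p` and the message `m` produced from it by
the encoder `κ`. -/
def encodedLaw [Fintype ι] (p : X → ℝ) (κ : (ι → X) → M → ℝ) (m : M) : (ι → X) → ℝ :=
  fun x => piDist (fun _ => p) x * κ x m

/-- Relative entropy as a real number; it agrees with `klDiv p q` when `p ≪ q`. -/
def relEntropy [Fintype X] (p q : X → ℝ) : ℝ :=
  ∑ x, p x * log (p x / q x)

/-- The entropy increase `H(Y) - H(X)` from input to output of a channel. The input `p` need not
be normalized, which makes this functional homogeneous of degree one in `p`. -/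
def entropyGain [Fintype X] [Fintype Y] (a : X → Y → ℝ) (p : X → ℝ) : ℝ :=
  entropy (outDist a p) - entropy p

/-- The difference `D(P_Y‖Q_Y) - D(P_Z‖Q_Z)` of the output divergences when `p` drives the channels
`aP`, `bP` and `q` drives `aQ`, `bQ`. -/
def relEntropyGap [Fintype X] [Fintype Y] [Fintype Z] (aP aQ : X → Y → ℝ) (bP bQ : X → Z → ℝ)
    (p q : X → ℝ) : ℝ :=
  relEntropy (outDist aP p) (outDist aQ q) - relEntropy (outDist bP p) (outDist bQ q)

/-! ### Mass functions and channels -/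

lemma AbsCont.mul_right {p q : X → ℝ} (h : AbsCont p q) (f : X → ℝ) :
    AbsCont (fun x => p x * f x) (fun x => q x * f x) := fun x hx => by
  change p x * f x = 0
  rcases mul_eq_zero.1 hx with hx | hx
  · rw [h x hx, zero_mul]
  · rw [hx, mul_zero]

lemma AbsCont.const_mul {p q : X → ℝ} (h : AbsCont p q) (c : ℝ) {d : ℝ} (hd : d ≠ 0) :
    AbsCont (fun x => c * p x) (fun x => d * q x) := fun x hx =>
  mul_eq_zero_of_right c (h x ((mul_eq_zero.1 hx).resolve_left hd))

lemma AbsCont.piDist [Fintype ι] {p q : ι → X → ℝ} (h : ∀ i, AbsCont (p i) (q i)) :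
    AbsCont (piDist p) (piDist q) := fun x hx => by
  obtain ⟨i, hi, hq⟩ := Finset.prod_eq_zero_iff.1 hx
  exact Finset.prod_eq_zero hi (h i _ hq)

lemma piDist_nonneg [Fintype ι] {p : ι → X → ℝ} (hp : ∀ i x, 0 ≤ p i x) (x : ι → X) :
    0 ≤ piDist p x :=
  Finset.prod_nonneg fun i _ => hp i (x i)

lemma blockChannel_nonneg [Fintype ι] {a : X → Y → ℝ} (ha : ∀ x y, 0 ≤ a x y) (x : ι → X)
    (y : ι → Y) : 0 ≤ blockChannel a x y :=
  piDist_nonneg (fun i => ha (x i)) y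

lemma AbsCont.blockChannel [Fintype ι] {a b : X → Y → ℝ} (h : ∀ x, AbsCont (a x) (b x))
    (x : ι → X) : AbsCont (blockChannel a x) (blockChannel b x) :=
  .piDist fun i => h (x i)

lemma encodedLaw_nonneg [Fintype ι] {p : X → ℝ} (hp : ∀ x, 0 ≤ p x) {κ : (ι → X) → M → ℝ}
    (hκ : ∀ x m, 0 ≤ κ x m) (m : M) (x : ι → X) : 0 ≤ encodedLaw p κ m x :=
  mul_nonneg (piDist_nonneg (fun _ => hp) x) (hκ x m)

lemma AbsCont.encodedLaw [Fintype ι] {p q : X → ℝ} (h : AbsCont p q) (κ : (ι → X) → M → ℝ) (m : M) :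
    AbsCont (encodedLaw p κ m) (encodedLaw q κ m) :=
  (AbsCont.piDist fun _ => h).mul_right fun x => κ x m

variable [Fintype ι] [Fintype M] [Fintype X] [Fintype Y] [Fintype Z]

lemma eq_zero_of_sum_eq_zero {p : X → ℝ} (hp : ∀ x, 0 ≤ p x) (h : ∑ x, p x = 0) (x : X) :
    p x = 0 :=
  (Finset.sum_eq_zero_iff_of_nonneg fun x _ => hp x).1 h x (Finset.mem_univ x)

lemma sum_fin_succ_fun {n : ℕ} (F : (Fin (n + 1) → X) → ℝ) :
    ∑ x, F x = ∑ x₀, ∑ x', F (Fin.cons x₀ x') := by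
  rw [← Fintype.sum_prod_type', ← (Fin.consEquiv fun _ => X).sum_comp]
  rfl

lemma AbsCont.outDist {p q : X → ℝ} {a b : X → Y → ℝ} (hpq : AbsCont p q)
    (hab : ∀ x, AbsCont (a x) (b x)) (hq : ∀ x, 0 ≤ q x) (hb : ∀ x y, 0 ≤ b x y) :
    AbsCont (outDist a p) (outDist b q) := fun y hy => Finset.sum_eq_zero fun x _ => by
  rcases mul_eq_zero.1 (eq_zero_of_sum_eq_zero (fun x => mul_nonneg (hq x) (hb x y)) hy x)
    with hx | hx
  · rw [hpq x hx, zero_mul]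
  · rw [hab x y hx, mul_zero]

lemma absCont_of_klDiv_lt_top {p q : X → ℝ} (h : klDiv p q < ⊤) : AbsCont p q := by
  by_contra hpq
  exact h.ne (if_neg hpq)

lemma AbsCont.klDiv_eq {p q : X → ℝ} (h : AbsCont p q) : klDiv p q = relEntropy p q :=
  if_pos h

lemma AbsCont.margFst {p q : X × Y → ℝ} (h : AbsCont p q) (hq : ∀ w, 0 ≤ q w) :
    AbsCont (margFst p) (margFst q) := fun x hx =>
  Finset.sum_eq_zero fun y _ => h _ (eq_zero_of_sum_eq_zero (fun y => hq (x, y)) hx y)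

lemma IsPMF.pushf {p : X → ℝ} (hp : IsPMF p) (f : X → Y) : IsPMF (pushf p f) := by
  classical
  refine ⟨fun y => Finset.sum_nonneg fun x _ => ?_, ?_⟩
  · split_ifs
    exacts [hp.1 x, le_rfl]
  · unfold _root_.pushf
    rw [Finset.sum_comm]
    simpa using hp.2

lemma IsPMF.margFst {p : X × Y → ℝ} (hp : IsPMF p) : IsPMF (margFst p) :=
  ⟨fun _ => Finset.sum_nonneg fun _ _ => hp.1 _, (Fintype.sum_prod_type p).symm.trans hp.2⟩

lemma margFst_pushf (p : M → ℝ) (f : M → X × Y) :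
    margFst (pushf p f) = pushf p fun w => (f w).1 := by
  classical
  funext x
  simp only [margFst, pushf]
  rw [Finset.sum_comm]
  refine Finset.sum_congr rfl fun w _ => ?_
  simp [Prod.ext_iff, ite_and]

lemma outDist_nonneg {p : X → ℝ} {a : X → Y → ℝ} (hp : ∀ x, 0 ≤ p x) (ha : ∀ x y, 0 ≤ a x y)
    (y : Y) : 0 ≤ outDist a p y :=
  Finset.sum_nonneg fun x _ => mul_nonneg (hp x) (ha x y)

lemma sum_outDist {a : X → Y → ℝ} (ha : ∀ x, ∑ y, a x y = 1) (p : X → ℝ) :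
    ∑ y, outDist a p y = ∑ x, p x := by
  unfold outDist
  rw [Finset.sum_comm]
  simp only [← Finset.mul_sum, ha, mul_one]

lemma outDist_const_mul (a : X → Y → ℝ) (c : ℝ) (p : X → ℝ) :
    outDist a (fun x => c * p x) = fun y => c * outDist a p y := by
  funext y
  simp only [outDist, Finset.mul_sum, mul_assoc]

lemma outDist_sum (a : X → Y → ℝ) (p : ι → X → ℝ) :
    outDist a (fun x => ∑ i, p i x) = fun y => ∑ i, outDist a (p i) y := by
  funext y
  simp only [outDist, Finset.sum_mul]
  exact Finset.sum_comm

lemma outDist_comm (a : X → Y → ℝ) (b : M → Z → ℝ) (p : X → M → ℝ) (y : Y) (z : Z) :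
    outDist b (fun m => outDist a (fun x => p x m) y) z =
      outDist a (fun x => outDist b (p x) z) y := by
  simp only [outDist, Finset.sum_mul]
  rw [Finset.sum_comm]
  exact Finset.sum_congr rfl fun _ _ => Finset.sum_congr rfl fun _ _ => mul_right_comm _ _ _

lemma IsPMF.outDist {p : X → ℝ} {a : X → Y → ℝ} (hp : IsPMF p) (ha : ∀ x, IsPMF (a x)) :
    IsPMF (outDist a p) :=
  ⟨outDist_nonneg hp.1 fun x => (ha x).1, (sum_outDist (fun x => (ha x).2) p).trans hp.2⟩

lemma sum_piDist [DecidableEq ι] (p : ι → X → ℝ) : ∑ x, piDist p x = ∏ i, ∑ x, p i x := by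
  rw [Finset.prod_univ_sum, Fintype.piFinset_univ]
  rfl

lemma IsPMF.piDist [DecidableEq ι] {p : ι → X → ℝ} (hp : ∀ i, IsPMF (p i)) : IsPMF (piDist p) :=
  ⟨piDist_nonneg fun i => (hp i).1, by simp only [sum_piDist, (hp _).2, Finset.prod_const_one]⟩

lemma IsPMF.blockChannel {A : Type*} [DecidableEq ι] {a : A → Y → ℝ} (ha : ∀ x, IsPMF (a x))
    (x : ι → A) : IsPMF (blockChannel a x) :=
  .piDist fun i => ha (x i)

lemma sum_piDist_mul_apply [DecidableEq ι] {p : ι → X → ℝ} (hp : ∀ i, IsPMF (p i)) (i : ι)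
    (φ : X → ℝ) : ∑ x, piDist p x * φ (x i) = ∑ x, p i x * φ x := by
  have hupdate (x : ι → X) :
      piDist (Function.update p i fun x => p i x * φ x) x = piDist p x * φ (x i) := by
    simp only [piDist, ← Finset.mul_prod_erase _ _ (Finset.mem_univ i), Function.update_self]
    rw [Finset.prod_congr rfl fun j hj => by rw [Function.update_of_ne (Finset.ne_of_mem_erase hj)]]
    ring
  simp only [← hupdate, sum_piDist]
  rw [← Finset.mul_prod_erase _ _ (Finset.mem_univ i), Function.update_self,
    Finset.prod_eq_one, mul_one]
  intro j hj
  rw [Function.update_of_ne (Finset.ne_of_mem_erase hj), (hp j).2]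

lemma outDist_blockChannel_piDist [DecidableEq ι] (a : X → Y → ℝ) (p : ι → X → ℝ) :
    outDist (blockChannel a) (piDist p) = piDist fun i => outDist a (p i) := by
  funext y
  simp only [outDist, blockChannel, piDist, Finset.prod_univ_sum, Fintype.piFinset_univ,
    Finset.prod_mul_distrib]

lemma margFst_jointDist {a : X → Y → ℝ} (ha : ∀ x, ∑ y, a x y = 1) (p : X → ℝ) :
    margFst (jointDist p a) = p := by
  funext x
  simp only [margFst, jointDist, ← Finset.mul_sum, ha, mul_one]

lemma outDist_condSnd_jointDist {a : X → Y → ℝ} (ha : ∀ x, ∑ y, a x y = 1) {p q : X → ℝ}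
    (hqp : AbsCont q p) : outDist (condSnd (jointDist p a)) q = outDist a q := by
  funext y
  refine Finset.sum_congr rfl fun x _ => ?_
  rcases eq_or_ne (p x) 0 with hx | hx
  · simp only [hqp x hx, zero_mul]
  · simp only [condSnd, margFst_jointDist ha, jointDist, mul_div_cancel_left₀ _ hx]

open Classical in
/-- The conditional law of the second coordinate given the first, replaced by `d` where the
conditioning event is null and `condSnd` is the junk value `0`. -/
def condSndOr (p : X × Y → ℝ) (d : X → Y → ℝ) : X → Y → ℝ :=
  fun x => if margFst p x = 0 then d x else condSnd p x

lemma IsPMF.condSndOr {p : X × Y → ℝ} (hp : IsPMF p) {d : X → Y → ℝ} (hd : ∀ x, IsPMF (d x))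
    (x : X) : IsPMF (condSndOr p d x) := by
  unfold _root_.condSndOr
  split_ifs with hx
  · exact hd x
  · refine ⟨fun y => div_nonneg (hp.1 _) (hp.margFst.1 x), ?_⟩
    simp only [condSnd, ← Finset.sum_div]
    exact div_self hx

lemma jointDist_margFst_condSndOr {p : X × Y → ℝ} (hp : ∀ w, 0 ≤ p w) (d : X → Y → ℝ) :
    jointDist (margFst p) (condSndOr p d) = p := by
  funext ⟨x, y⟩
  simp only [jointDist, condSndOr]
  split_ifs with hx
  · rw [hx, zero_mul, eq_zero_of_sum_eq_zero (fun y => hp (x, y)) hx y]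
  · exact mul_div_cancel₀ _ hx

lemma AbsCont.condSndOr {p q : X × Y → ℝ} (hpq : AbsCont p q) (hq : ∀ w, 0 ≤ q w)
    (d : X → Y → ℝ) (x : X) : AbsCont (condSndOr p (condSndOr q d) x) (condSndOr q d x) := by
  intro y hy
  rcases eq_or_ne (_root_.margFst p x) 0 with hx | hx
  · rwa [_root_.condSndOr, if_pos hx]
  · have hqx : _root_.margFst q x ≠ 0 := fun h => hx (hpq.margFst hq x h)
    have hqxy : q (x, y) = 0 := by
      simpa [_root_.condSndOr, if_neg hqx, condSnd, hqx] using hy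
    simp only [_root_.condSndOr, if_neg hx, condSnd, hpq _ hqxy, zero_div]

lemma exists_channel {p : X × Y → ℝ} (hp : IsPMF p) :
    ∃ a : X → Y → ℝ, (∀ x, IsPMF (a x)) ∧ jointDist (margFst p) a = p :=
  ⟨condSndOr p fun _ => pushf p Prod.snd, hp.condSndOr fun _ => hp.pushf _,
    jointDist_margFst_condSndOr hp.1 _⟩

lemma exists_channels_absCont {p q : X × Y → ℝ} (hp : IsPMF p) (hq : IsPMF q) (hpq : AbsCont p q) :
    ∃ a b : X → Y → ℝ, (∀ x, IsPMF (a x)) ∧ (∀ x, IsPMF (b x)) ∧ (∀ x, AbsCont (a x) (b x)) ∧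
      jointDist (margFst p) a = p ∧ jointDist (margFst q) b = q :=
  have hb := hq.condSndOr fun _ => hq.pushf Prod.snd
  ⟨_, _, hp.condSndOr hb, hb, hpq.condSndOr hq.1 _, jointDist_margFst_condSndOr hp.1 _,
    jointDist_margFst_condSndOr hq.1 _⟩

/-! ### Entropy and the log-sum inequality -/

lemma entropy_eq_sum_negMulLog (p : X → ℝ) : entropy p = ∑ x, negMulLog (p x) := by
  simp only [entropy, negMulLog, neg_mul, Finset.sum_neg_distrib]

lemma entropy_prod_type (p : X × Y → ℝ) : entropy p = ∑ x, entropy fun y => p (x, y) := by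
  simp only [entropy_eq_sum_negMulLog, Fintype.sum_prod_type]

lemma sub_le_mul_log_div {x y : ℝ} (hx : 0 ≤ x) (hy : 0 ≤ y) (hxy : y = 0 → x = 0) :
    x - y ≤ x * log (x / y) := by
  rcases hx.eq_or_lt with rfl | hx
  · simpa using hy
  · have hy' : 0 < y := hy.lt_of_ne fun h => hx.ne' (hxy h.symm)
    calc x - y = x * (1 - (x / y)⁻¹) := by field_simp
      _ ≤ x * log (x / y) :=
        mul_le_mul_of_nonneg_left (one_sub_inv_le_log_of_pos (div_pos hx hy')) hx.le

lemma sum_mul_log_div_sum_le_relEntropy {p q : X → ℝ} (hp : ∀ x, 0 ≤ p x) (hq : ∀ x, 0 ≤ q x)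
    (hpq : AbsCont p q) : (∑ x, p x) * log ((∑ x, p x) / ∑ x, q x) ≤ relEntropy p q := by
  set P := ∑ x, p x with hP
  set Q := ∑ x, q x with hQ
  rcases eq_or_ne P 0 with hP0 | hP0
  · simp [relEntropy, hP0, eq_zero_of_sum_eq_zero hp hP0]
  have hQ0 : Q ≠ 0 := fun h =>
    hP0 (Finset.sum_eq_zero fun x _ => hpq x (eq_zero_of_sum_eq_zero hq h x))
  have hPQ : 0 < P / Q := div_pos ((Finset.sum_nonneg fun x _ => hp x).lt_of_ne' hP0)
    ((Finset.sum_nonneg fun x _ => hq x).lt_of_ne' hQ0)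
  have hterm (x : X) : p x * log (P / Q) + (p x - q x * (P / Q)) ≤ p x * log (p x / q x) := by
    rcases eq_or_ne (p x) 0 with hx | hx
    · simpa [hx] using mul_nonneg (hq x) hPQ.le
    · have hqx : q x ≠ 0 := mt (hpq x) hx
      have h := sub_le_mul_log_div (hp x) (mul_nonneg (hq x) hPQ.le) fun h =>
        absurd h (mul_ne_zero hqx hPQ.ne')
      rw [← div_div, log_div (div_ne_zero hx hqx) hPQ.ne'] at h
      linarith
  calc P * log (P / Q) = ∑ x, (p x * log (P / Q) + (p x - q x * (P / Q))) := by
        rw [Finset.sum_add_distrib, Finset.sum_sub_distrib, ← Finset.sum_mul, ← Finset.sum_mul,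
          ← hP, ← hQ, mul_div_cancel₀ _ hQ0, sub_self, add_zero]
    _ ≤ relEntropy p q := Finset.sum_le_sum fun x _ => hterm x

lemma sum_negMulLog_le {p : X → ℝ} (hp : ∀ x, 0 ≤ p x) :
    ∑ x, negMulLog (p x) ≤ negMulLog (∑ x, p x) + (∑ x, p x) * log (Fintype.card X) := by
  have h := sum_mul_log_div_sum_le_relEntropy hp (fun _ => zero_le_one)
    fun _ h => absurd h one_ne_zero
  rcases eq_or_ne (∑ x, p x) 0 with hP | hP
  · simp [eq_zero_of_sum_eq_zero hp hP]
  · have : Nonempty X := not_isEmpty_iff.1 fun _ => hP (Fintype.sum_empty p)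
    simp only [relEntropy, div_one, Finset.sum_const, Finset.card_univ, nsmul_eq_mul, mul_one] at h
    rw [log_div hP (Nat.cast_ne_zero.2 Fintype.card_ne_zero)] at h
    simp only [negMulLog, neg_mul, Finset.sum_neg_distrib]
    linarith

lemma negMulLog_sum_le {p : X → ℝ} (hp : ∀ x, 0 ≤ p x) :
    negMulLog (∑ x, p x) ≤ ∑ x, negMulLog (p x) := by
  simp only [negMulLog, neg_mul, Finset.sum_neg_distrib, Finset.sum_mul]
  refine neg_le_neg (Finset.sum_le_sum fun x hx => ?_)
  rcases (hp x).eq_or_lt with h | h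
  · simp [← h]
  · exact mul_le_mul_of_nonneg_left
      (log_le_log h (Finset.single_le_sum (fun x _ => hp x) hx)) (hp x)

lemma sum_entropy_le {ν : M → X → ℝ} (hν : ∀ m x, 0 ≤ ν m x) :
    ∑ m, entropy (ν m) ≤
      entropy (fun x => ∑ m, ν m x) + (∑ x, ∑ m, ν m x) * log (Fintype.card M) := by
  simp only [entropy_eq_sum_negMulLog]
  rw [Finset.sum_comm, Finset.sum_mul, ← Finset.sum_add_distrib]
  exact Finset.sum_le_sum fun x _ => sum_negMulLog_le fun m => hν m x

lemma entropy_sum_le {ν : M → X → ℝ} (hν : ∀ m x, 0 ≤ ν m x) :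
    entropy (fun x => ∑ m, ν m x) ≤ ∑ m, entropy (ν m) := by
  simp only [entropy_eq_sum_negMulLog]
  rw [Finset.sum_comm]
  exact Finset.sum_le_sum fun x _ => negMulLog_sum_le fun m => hν m x

lemma entropy_const_mul (c : ℝ) (p : X → ℝ) :
    entropy (fun x => c * p x) = c * entropy p + (∑ x, p x) * negMulLog c := by
  simp only [entropy_eq_sum_negMulLog, negMulLog_mul, Finset.sum_add_distrib, Finset.mul_sum,
    Finset.sum_mul]
  exact add_comm _ _

lemma entropy_jointDist {a : X → Y → ℝ} (ha : ∀ x, ∑ y, a x y = 1) (p : X → ℝ) :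
    entropy (jointDist p a) = entropy p + ∑ x, p x * entropy (a x) := by
  rw [entropy_prod_type]
  simp only [entropy_eq_sum_negMulLog, jointDist, negMulLog_mul,
    Finset.sum_add_distrib, ← Finset.sum_mul, ← Finset.mul_sum, ha, one_mul]

lemma entropy_piDist [DecidableEq ι] {p : ι → X → ℝ} (hp : ∀ i, IsPMF (p i)) :
    entropy (piDist p) = ∑ i, entropy (p i) := by
  have hlog (x : ι → X) :
      piDist p x * log (piDist p x) = ∑ i, piDist p x * log (p i (x i)) := by
    rcases eq_or_ne (piDist p x) 0 with hx | hx
    · simp [hx]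
    · rw [← Finset.mul_sum, ← log_prod fun i hi => Finset.prod_ne_zero_iff.1 hx i hi]
      rfl
  simp only [entropy, hlog, Finset.sum_neg_distrib]
  rw [Finset.sum_comm]
  exact congrArg _ (Finset.sum_congr rfl fun i _ => sum_piDist_mul_apply hp i fun x => log (p i x))

/-! ### Entropy gain -/

lemma entropyGain_const_mul {a : X → Y → ℝ} (ha : ∀ x, ∑ y, a x y = 1) (c : ℝ) (p : X → ℝ) :
    entropyGain a (fun x => c * p x) = c * entropyGain a p := by
  simp only [entropyGain, outDist_const_mul, entropy_const_mul, sum_outDist ha]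
  ring

lemma entropyGain_eq_sum {a : X → Y → ℝ} (ha : ∀ x, IsPMF (a x)) {p : X → ℝ} (hp : ∀ x, 0 ≤ p x) :
    entropyGain a p = ∑ x, ∑ y, a x y * (p x * log (p x / outDist a p y)) := by
  have hterm (x : X) (y : Y) : a x y * (p x * log (p x / outDist a p y)) =
      a x y * (p x * log (p x)) - p x * a x y * log (outDist a p y) := by
    rcases eq_or_ne (p x * a x y) 0 with h | h
    · rcases mul_eq_zero.1 h with h | h <;> simp [h]
    · have hout : outDist a p y ≠ 0 := fun h0 =>
        h (eq_zero_of_sum_eq_zero (fun x => mul_nonneg (hp x) ((ha x).1 y)) h0 x)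
      rw [log_div (left_ne_zero_of_mul h) hout]
      ring
  simp only [hterm, Finset.sum_sub_distrib, ← Finset.sum_mul, (ha _).2, one_mul]
  rw [Finset.sum_comm]
  simp only [← Finset.sum_mul, entropyGain, entropy]
  change _ = _ - ∑ y, outDist a p y * log (outDist a p y)
  ring

lemma entropyGain_sum_le {a : X → Y → ℝ} (ha : ∀ x, IsPMF (a x)) {ν : M → X → ℝ}
    (hν : ∀ m x, 0 ≤ ν m x) :
    entropyGain a (fun x => ∑ m, ν m x) ≤ ∑ m, entropyGain a (ν m) := by
  have hsum (x : X) : 0 ≤ ∑ m, ν m x := Finset.sum_nonneg fun m _ => hν m x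
  simp only [entropyGain_eq_sum ha (hν _), entropyGain_eq_sum ha hsum, outDist_sum]
  rw [Finset.sum_comm (s := (Finset.univ : Finset M))]
  refine Finset.sum_le_sum fun x _ => ?_
  rw [Finset.sum_comm (s := (Finset.univ : Finset M))]
  refine Finset.sum_le_sum fun y _ => ?_
  rw [← Finset.mul_sum]
  rcases ((ha x).1 y).eq_or_lt with hxy | hxy
  · simp [← hxy]
  · refine mul_le_mul_of_nonneg_left (sum_mul_log_div_sum_le_relEntropy (fun m => hν m x)
      (fun m => outDist_nonneg (hν m) (fun x => (ha x).1) y) fun m hm => ?_) hxy.le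
    exact (mul_eq_zero.1 (eq_zero_of_sum_eq_zero
      (fun x => mul_nonneg (hν m x) ((ha x).1 y)) hm x)).resolve_right hxy.ne'

/-- A data-processing inequality for the label `m`. -/
lemma sum_entropyGain_outDist_le {a : X → Y → ℝ} (ha : ∀ x, IsPMF (a x)) {b : M → Z → ℝ}
    (hb : ∀ m, IsPMF (b m)) {ν : M → X → ℝ} (hν : ∀ m x, 0 ≤ ν m x) :
    ∑ z, entropyGain a (fun x => outDist b (fun m => ν m x) z) ≤ ∑ m, entropyGain a (ν m) :=
  calc ∑ z, entropyGain a (fun x => outDist b (fun m => ν m x) z)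
    _ ≤ ∑ z, ∑ m, b m z * entropyGain a (ν m) := Finset.sum_le_sum fun z _ => by
        simp only [outDist, mul_comm (ν _ _), ← entropyGain_const_mul fun x => (ha x).2]
        exact entropyGain_sum_le ha fun m x => mul_nonneg ((hb m).1 z) (hν m x)
    _ = ∑ m, entropyGain a (ν m) := by
        rw [Finset.sum_comm]
        simp only [← Finset.sum_mul, (hb _).2, one_mul]

lemma sum_entropyGain_mul_le {a : X → Y → ℝ} (ha : ∀ x, IsPMF (a x)) {p : X → ℝ} (hp : IsPMF p)
    {κ : X → M → ℝ} (hκ : ∀ x, IsPMF (κ x)) :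
    ∑ m, entropyGain a (fun x => p x * κ x m) ≤ entropyGain a p + log (Fintype.card M) := by
  have hν (m : M) (x : X) : 0 ≤ p x * κ x m := mul_nonneg (hp.1 x) ((hκ x).1 m)
  have hsum : (fun x => ∑ m, p x * κ x m) = p := funext fun x => by
    rw [← Finset.mul_sum, (hκ x).2, mul_one]
  have hin := entropy_sum_le hν
  have hout := sum_entropy_le fun m => outDist_nonneg (hν m) fun x => (ha x).1
  rw [hsum] at hin
  simp only [← funext_iff.1 (outDist_sum a _), hsum, (hp.outDist ha).2, one_mul] at hout
  simp only [entropyGain, Finset.sum_sub_distrib]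
  linarith

lemma entropyGain_blockChannel_piDist [DecidableEq ι] {a : X → Y → ℝ} (ha : ∀ x, IsPMF (a x))
    {p : ι → X → ℝ} (hp : ∀ i, IsPMF (p i)) :
    entropyGain (blockChannel a) (piDist p) = ∑ i, entropyGain a (p i) := by
  simp only [entropyGain, outDist_blockChannel_piDist, entropy_piDist hp,
    entropy_piDist fun i => (hp i).outDist ha, Finset.sum_sub_distrib]

/-- For `U - X - Y` Markov, `I(U;X|Y) = ∑ᵤ (H(Y) - H(X))[P_{X,U=u}] - (H(Y) - H(X))[P_X]`. -/
lemma condMI_eq_sum_entropyGain {a : X → Y → ℝ} (ha : ∀ x, ∑ y, a x y = 1) {κ : X → M → ℝ}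
    (hκ : ∀ x, ∑ m, κ x m = 1) (p : X → ℝ) :
    condMI (fun w : M × X × Y => κ w.2.1 w.1 * jointDist p a (w.2.1, w.2.2))
        (fun w => w.1) (fun w => w.2.1) (fun w => w.2.2) =
      ∑ m, entropyGain a (fun x => κ x m * p x) - entropyGain a p := by
  classical
  set P : M × X × Y → ℝ := fun w => κ w.2.1 w.1 * jointDist p a (w.2.1, w.2.2)
  set r : M → X → ℝ := fun m x => κ x m * p x
  have hMY : pushf P (fun w => (w.1, w.2.2)) = fun w => outDist a (r w.1) w.2 := by
    funext ⟨m, y⟩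
    simp [pushf, outDist, P, r, jointDist, Fintype.sum_prod_type, ite_and, mul_assoc]
  have hXY : pushf P (fun w => (w.2.1, w.2.2)) = jointDist p a := by
    funext ⟨x, y⟩
    simp [pushf, P, jointDist, Fintype.sum_prod_type, ← Finset.sum_mul, hκ]
  have hMXY : pushf P (fun w => (w.1, w.2.1, w.2.2)) = P := by
    funext w
    simp [pushf]
  have hY : pushf P (fun w => w.2.2) = outDist a p := by
    funext y
    rw [pushf, Fintype.sum_prod_type_right]
    simp [outDist, P, jointDist, Fintype.sum_prod_type, Finset.sum_ite_irrel, ← Finset.sum_mul, hκ]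
  have hP (m : M) : (fun w => P (m, w)) = jointDist (r m) a :=
    funext fun _ => (mul_assoc _ _ _).symm
  have hcond : ∑ m, ∑ x, r m x * entropy (a x) = ∑ x, p x * entropy (a x) := by
    rw [Finset.sum_comm]
    simp only [r, ← Finset.sum_mul, hκ, one_mul]
  simp only [condMI, hMY, hXY, hMXY, hY, entropy_prod_type P, hP, entropy_jointDist ha, hcond,
    entropy_prod_type fun w : M × Y => outDist a (r w.1) w.2, entropyGain, Finset.sum_add_distrib,
    Finset.sum_sub_distrib]
  ring

lemma relEntropy_const_mul {p q : X → ℝ} (hpq : AbsCont p q) {c d : ℝ} (hc : c ≠ 0) (hd : d ≠ 0) :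
    relEntropy (fun x => c * p x) (fun x => d * q x) =
      c * (relEntropy p q + (∑ x, p x) * log (c / d)) := by
  simp only [relEntropy, Finset.sum_mul, ← Finset.sum_add_distrib, Finset.mul_sum]
  refine Finset.sum_congr rfl fun x _ => ?_
  rcases eq_or_ne (p x) 0 with hx | hx
  · simp [hx]
  · rw [mul_div_mul_comm, log_mul (div_ne_zero hc hd) (div_ne_zero hx (mt (hpq x) hx))]
    ring

/-- The normalizing constants cancel because both outputs have the mass of the input. -/
lemma relEntropyGap_const_mul {aP aQ : X → Y → ℝ} {bP bQ : X → Z → ℝ} (haP : ∀ x, ∑ y, aP x y = 1)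
    (hbP : ∀ x, ∑ z, bP x z = 1) {p q : X → ℝ} (ha : AbsCont (outDist aP p) (outDist aQ q))
    (hb : AbsCont (outDist bP p) (outDist bQ q)) {c d : ℝ} (hc : c ≠ 0) (hd : d ≠ 0) :
    relEntropyGap aP aQ bP bQ (fun x => c * p x) (fun x => d * q x) =
      c * relEntropyGap aP aQ bP bQ p q := by
  simp only [relEntropyGap, outDist_const_mul, relEntropy_const_mul ha hc hd,
    relEntropy_const_mul hb hc hd, sum_outDist haP, sum_outDist hbP]
  ring

/-! ### Single-letterization -/

universe u v

/-- The values of the auxiliary variable `(i, Yⁱ⁻¹, Zᵢ₊₁ⁿ)` of the Csiszár sum identity: either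
`i = 1` and the remaining `Z`-block is recorded, or `Y₁` is recorded and `i` points into the
remaining letters. -/
def AuxIndex (Y : Type u) (Z : Type v) : ℕ → Type (max u v)
  | 0 => PEmpty
  | n + 1 => (Y × AuxIndex Y Z n) ⊕ (Fin n → Z)

instance AuxIndex.instFintype : (n : ℕ) → Fintype (AuxIndex Y Z n)
  | 0 => inferInstanceAs (Fintype PEmpty)
  | n + 1 =>
    have := AuxIndex.instFintype n
    inferInstanceAs (Fintype ((Y × AuxIndex Y Z n) ⊕ (Fin n → Z)))

/-- The joint law of the letter `Xᵢ` and the auxiliary variable `(i, Yⁱ⁻¹, Zᵢ₊₁ⁿ)`, summed over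
`i`, when the block `Xⁿ` has law `μ` and `Y`, `Z` are its outputs through `a`, `b`. -/
def auxLaw (a : X → Y → ℝ) (b : X → Z → ℝ) :
    (n : ℕ) → ((Fin n → X) → ℝ) → AuxIndex Y Z n → X → ℝ
  | 0, _, u => u.elim
  | n + 1, μ, .inl (y, u) => auxLaw a b n (fun x' => outDist a (fun x => μ (Fin.cons x x')) y) u
  | _ + 1, μ, .inr z => fun x => outDist (blockChannel b) (fun x' => μ (Fin.cons x x')) z

lemma sum_auxIndex_zero (F : AuxIndex Y Z 0 → ℝ) : ∑ u, F u = 0 :=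
  Finset.sum_eq_zero fun u _ => u.elim

lemma sum_auxIndex_succ {n : ℕ} (F : AuxIndex Y Z (n + 1) → ℝ) :
    ∑ u, F u = ∑ y, ∑ u, F (.inl (y, u)) + ∑ z, F (.inr z) := by
  rw [← Fintype.sum_prod_type']
  exact Fintype.sum_sum_type F

lemma outDist_blockChannel_zero (a : X → Y → ℝ) (μ : (Fin 0 → X) → ℝ) (y : Fin 0 → Y) :
    outDist (blockChannel a) μ y = μ default := by
  simp [outDist, blockChannel, piDist]

lemma outDist_blockChannel_cons {n : ℕ} (a : X → Y → ℝ) (μ : (Fin (n + 1) → X) → ℝ) (y : Y)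
    (y' : Fin n → Y) :
    outDist (blockChannel a) μ (Fin.cons y y') =
      outDist a (fun x => outDist (blockChannel a) (fun x' => μ (Fin.cons x x')) y') y := by
  simp only [outDist, sum_fin_succ_fun, blockChannel, piDist, Fin.prod_univ_succ, Fin.cons_zero,
    Fin.cons_succ, Finset.sum_mul]
  exact Finset.sum_congr rfl fun _ _ => Finset.sum_congr rfl fun _ _ => by ring

lemma outDist_blockChannel_cons_comm {n : ℕ} (a : X → Y → ℝ) (μ : (Fin (n + 1) → X) → ℝ) (y : Y)
    (y' : Fin n → Y) :
    outDist (blockChannel a) μ (Fin.cons y y') =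
      outDist (blockChannel a) (fun x' => outDist a (fun x => μ (Fin.cons x x')) y) y' := by
  rw [outDist_comm, outDist_blockChannel_cons]

lemma auxLaw_nonneg {a : X → Y → ℝ} {b : X → Z → ℝ} (ha : ∀ x y, 0 ≤ a x y)
    (hb : ∀ x z, 0 ≤ b x z) {n : ℕ} {μ : (Fin n → X) → ℝ} (hμ : ∀ x, 0 ≤ μ x)
    (u : AuxIndex Y Z n) (x : X) : 0 ≤ auxLaw a b n μ u x := by
  induction n with
  | zero => exact u.elim
  | succ n ih =>
    rcases u with ⟨y, u⟩ | z
    · exact ih (fun x' => outDist_nonneg (fun x => hμ _) ha y) u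
    · exact outDist_nonneg (fun x' => hμ _) (blockChannel_nonneg hb) z

lemma AbsCont.auxLaw {aP aQ : X → Y → ℝ} {bP bQ : X → Z → ℝ} (haQ : ∀ x y, 0 ≤ aQ x y)
    (hbQ : ∀ x z, 0 ≤ bQ x z) (ha : ∀ x, AbsCont (aP x) (aQ x)) (hb : ∀ x, AbsCont (bP x) (bQ x))
    {n : ℕ} {μ ν : (Fin n → X) → ℝ} (hν : ∀ x, 0 ≤ ν x) (hμν : AbsCont μ ν)
    (u : AuxIndex Y Z n) : AbsCont (auxLaw aP bP n μ u) (auxLaw aQ bQ n ν u) := by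
  induction n with
  | zero => exact u.elim
  | succ n ih =>
    rcases u with ⟨y, u⟩ | z
    · exact ih (fun x' => outDist_nonneg (fun x => hν _) haQ y)
        (fun x' => AbsCont.outDist (fun x => hμν _) ha (fun x => hν _) haQ y) u
    · exact fun x => AbsCont.outDist (fun x' => hμν _) (.blockChannel hb) (fun x' => hν _)
        (blockChannel_nonneg hbQ) z

lemma sum_auxLaw_mul {a : X → Y → ℝ} {b : X → Z → ℝ} (ha : ∀ x, IsPMF (a x))
    (hb : ∀ x, IsPMF (b x)) (φ : X → ℝ) {n : ℕ} (μ : (Fin n → X) → ℝ) :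
    ∑ u, ∑ x, auxLaw a b n μ u x * φ x = ∑ x, μ x * ∑ i, φ (x i) := by
  induction n with
  | zero => simp [sum_auxIndex_zero]
  | succ n ih =>
    have htail : ∑ y, ∑ x', outDist a (fun x => μ (Fin.cons x x')) y * ∑ i, φ (x' i) =
        ∑ x, ∑ x', μ (Fin.cons x x') * ∑ i, φ (x' i) := by
      rw [Finset.sum_comm, Finset.sum_comm (s := (Finset.univ : Finset X))]
      simp only [← Finset.sum_mul, sum_outDist fun x => (ha x).2]
    have hhead : ∑ z, ∑ x, outDist (blockChannel b) (fun x' => μ (Fin.cons x x')) z * φ x =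
        ∑ x, ∑ x', μ (Fin.cons x x') * φ x := by
      rw [Finset.sum_comm]
      simp only [← Finset.sum_mul, sum_outDist fun x => (IsPMF.blockChannel hb x).2]
    simp only [sum_auxIndex_succ, auxLaw, ih, htail, hhead, sum_fin_succ_fun, Fin.sum_univ_succ,
      Fin.cons_zero, Fin.cons_succ, mul_add, Finset.sum_add_distrib]
    exact add_comm _ _

/-- The Csiszár sum identity: replacing the `Y`-block by the `Z`-block one letter at a time
telescopes, for any function `g` of the two output laws. -/
lemma sum_blockChannel_sub_sum_blockChannel (g : ℝ → ℝ → ℝ) (aP aQ : X → Y → ℝ)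
    (bP bQ : X → Z → ℝ) {n : ℕ} (μ ν : (Fin n → X) → ℝ) :
    ∑ y, g (outDist (blockChannel aP) μ y) (outDist (blockChannel aQ) ν y)
        - ∑ z, g (outDist (blockChannel bP) μ z) (outDist (blockChannel bQ) ν z) =
      ∑ u, (∑ y, g (outDist aP (auxLaw aP bP n μ u) y) (outDist aQ (auxLaw aQ bQ n ν u) y)
        - ∑ z, g (outDist bP (auxLaw aP bP n μ u) z) (outDist bQ (auxLaw aQ bQ n ν u) z)) := by
  induction n with
  | zero => simp [sum_auxIndex_zero, outDist_blockChannel_zero]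
  | succ n ih =>
    rw [sum_auxIndex_succ]
    simp only [auxLaw, ← ih, Finset.sum_sub_distrib, ← outDist_blockChannel_cons,
      ← outDist_blockChannel_cons_comm]
    simp only [sum_fin_succ_fun, outDist_comm _ _ fun x x' => μ (Fin.cons x x'),
      outDist_comm _ _ fun x x' => ν (Fin.cons x x')]
    rw [Finset.sum_comm (s := (Finset.univ : Finset (Fin n → Z))) (t := (Finset.univ : Finset Y)),
      Finset.sum_comm (s := (Finset.univ : Finset (Fin n → Z))) (t := (Finset.univ : Finset Z))]
    ring

lemma relEntropyGap_blockChannel (aP aQ : X → Y → ℝ) (bP bQ : X → Z → ℝ) {n : ℕ}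
    (μ ν : (Fin n → X) → ℝ) :
    relEntropyGap (blockChannel aP) (blockChannel aQ) (blockChannel bP) (blockChannel bQ) μ ν =
      ∑ u, relEntropyGap aP aQ bP bQ (auxLaw aP bP n μ u) (auxLaw aQ bQ n ν u) :=
  sum_blockChannel_sub_sum_blockChannel (fun s t => s * log (s / t)) aP aQ bP bQ μ ν

lemma sum_entropyGain_auxLaw_fst_le {a : X → Y → ℝ} {b : X → Z → ℝ} (ha : ∀ x, IsPMF (a x))
    (hb : ∀ x, IsPMF (b x)) {n : ℕ} {μ : (Fin n → X) → ℝ} (hμ : ∀ x, 0 ≤ μ x) :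
    ∑ u, entropyGain a (auxLaw a b n μ u) ≤ entropyGain (blockChannel a) μ := by
  induction n with
  | zero =>
    simp [sum_auxIndex_zero, entropyGain, entropy, outDist_blockChannel_zero]
  | succ n ih =>
    have htail := Finset.sum_le_sum fun y (_ : y ∈ Finset.univ) => ih fun x' =>
      outDist_nonneg (fun x => hμ (Fin.cons x x')) (fun x => (ha x).1) y
    have hhead := sum_entropyGain_outDist_le (ν := fun x' x => μ (Fin.cons x x')) ha
      (IsPMF.blockChannel hb) fun x' x => hμ _
    rw [sum_auxIndex_succ]
    refine (add_le_add htail hhead).trans_eq ?_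
    simp only [entropyGain, Finset.sum_sub_distrib, ← outDist_blockChannel_cons_comm,
      entropy_eq_sum_negMulLog, sum_fin_succ_fun]
    rw [Finset.sum_comm (s := (Finset.univ : Finset Y)) (t := (Finset.univ : Finset (Fin n → X))),
      Finset.sum_comm (s := (Finset.univ : Finset X)) (t := (Finset.univ : Finset (Fin n → X)))]
    ring

lemma sum_entropyGain_auxLaw_snd_le {a : X → Y → ℝ} {b : X → Z → ℝ} (ha : ∀ x, IsPMF (a x))
    (hb : ∀ x, IsPMF (b x)) {n : ℕ} {μ : (Fin n → X) → ℝ} (hμ : ∀ x, 0 ≤ μ x) :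
    ∑ u, entropyGain b (auxLaw a b n μ u) ≤ entropyGain (blockChannel b) μ := by
  have hsum := sum_blockChannel_sub_sum_blockChannel (fun s _ => negMulLog s) a a b b μ μ
  have hfst := sum_entropyGain_auxLaw_fst_le ha hb hμ
  simp only [← entropy_eq_sum_negMulLog, Finset.sum_sub_distrib] at hsum
  simp only [entropyGain, Finset.sum_sub_distrib] at hfst ⊢
  linarith

lemma sum_auxLaw_encodedLaw {a : X → Y → ℝ} {b : X → Z → ℝ} (ha : ∀ x, IsPMF (a x))
    (hb : ∀ x, IsPMF (b x)) {p : X → ℝ} (hp : IsPMF p) {n : ℕ} {κ : (Fin n → X) → M → ℝ}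
    (hκ : ∀ x, ∑ m, κ x m = 1) (x : X) :
    ∑ m, ∑ u, auxLaw a b n (encodedLaw p κ m) u x = n * p x := by
  classical
  set φ : X → ℝ := Pi.single x 1
  calc _ = ∑ m, ∑ u, ∑ t, auxLaw a b n (encodedLaw p κ m) u t * φ t := by
        simp [φ, Pi.single_apply]
    _ = ∑ t : Fin n → X, piDist (fun _ => p) t * ∑ i, φ (t i) := by
        simp only [sum_auxLaw_mul ha hb, encodedLaw]
        rw [Finset.sum_comm]
        simp only [← Finset.sum_mul, ← Finset.mul_sum, hκ, mul_one]
    _ = ∑ _i : Fin n, ∑ t, p t * φ t := by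
        simp only [Finset.mul_sum]
        rw [Finset.sum_comm]
        exact Finset.sum_congr rfl fun i _ => sum_piDist_mul_apply (fun _ => hp) i φ
    _ = n * p x := by simp [φ, Pi.single_apply]

lemma sum_entropyGain_encodedLaw_le {a : X → Y → ℝ} (ha : ∀ x, IsPMF (a x)) {p : X → ℝ}
    (hp : IsPMF p) {n : ℕ} {κ : (Fin n → X) → M → ℝ} (hκ : ∀ x, IsPMF (κ x)) :
    ∑ m, entropyGain (blockChannel a) (encodedLaw p κ m) ≤
      n * entropyGain a p + log (Fintype.card M) := by
  refine (sum_entropyGain_mul_le (IsPMF.blockChannel ha) (.piDist fun _ => hp) hκ).trans_eq ?_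
  rw [entropyGain_blockChannel_piDist ha fun _ => hp, Finset.sum_const, Finset.card_univ,
    Fintype.card_fin, nsmul_eq_mul]

lemma sum_prod_jointDist_mul {A : Type*} [DecidableEq ι] (p : X → ℝ) (a : X → Y → ℝ)
    (κ : (ι → X) → A → ℝ) (m : A) (y : ι → Y) :
    ∑ x : ι → X, (∏ i, jointDist p a (x i, y i)) * κ x m =
      outDist (blockChannel a) (encodedLaw p κ m) y := by
  simp only [outDist, jointDist, Finset.prod_mul_distrib]
  exact Finset.sum_congr rfl fun x _ => mul_right_comm _ _ _

lemma klDiv_encodedLaw [DecidableEq ι] {aP aQ : X → Y → ℝ} (haQ : ∀ x y, 0 ≤ aQ x y)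
    (ha : ∀ x, AbsCont (aP x) (aQ x)) {pX qX : X → ℝ} (hqX : ∀ x, 0 ≤ qX x) (hpq : AbsCont pX qX)
    {κ : (ι → X) → M → ℝ} (hκ : ∀ x m, 0 ≤ κ x m) :
    klDiv (fun mw : M × (ι → Y) => ∑ x, (∏ i, jointDist pX aP (x i, mw.2 i)) * κ x mw.1)
        (fun mw => ∑ x, (∏ i, jointDist qX aQ (x i, mw.2 i)) * κ x mw.1) =
      (∑ m, relEntropy (outDist (blockChannel aP) (encodedLaw pX κ m))
        (outDist (blockChannel aQ) (encodedLaw qX κ m)) : ℝ) := by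
  simp only [sum_prod_jointDist_mul]
  refine (AbsCont.klDiv_eq fun mw : M × (ι → Y) => AbsCont.outDist (hpq.encodedLaw κ mw.1)
    (.blockChannel ha) (encodedLaw_nonneg hqX hκ mw.1) (blockChannel_nonneg haQ) mw.2).trans ?_
  rw [relEntropy, Fintype.sum_prod_type]
  rfl

/-! ### The single-letter bound -/

lemma ereal_coe_sum (f : ι → ℝ) : ((∑ i, f i : ℝ) : EReal) = ∑ i, (f i : EReal) :=
  map_sum (⟨⟨(↑), EReal.coe_zero⟩, EReal.coe_add⟩ : ℝ →+ EReal) f Finset.univ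

lemma log_two_pow_floor_le {t : ℝ} (ht : 0 ≤ t) : log ((2 ^ ⌊t⌋₊ : ℕ) : ℝ) ≤ t := by
  rw [Nat.cast_pow, log_pow]
  calc (⌊t⌋₊ : ℝ) * log (2 : ℕ) ≤ ⌊t⌋₊ * 1 := by
        gcongr
        exact (log_two_lt_d9.trans (by norm_num)).le
    _ ≤ t := by simpa using Nat.floor_le ht

lemma relEntropyGap_le_fdiff {aP aQ : X → Y → ℝ} {bP bQ : X → Z → ℝ}
    (haP : ∀ x, ∑ y, aP x y = 1) (haQ : ∀ x, ∑ y, aQ x y = 1) (hbP : ∀ x, ∑ z, bP x z = 1)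
    (hbQ : ∀ x, ∑ z, bQ x z = 1) {pX qX p q : X → ℝ} (hp : AbsCont p pX) (hq : IsPMF q)
    (hqX : AbsCont q qX) (ha : AbsCont (outDist aP p) (outDist aQ q))
    (hb : AbsCont (outDist bP p) (outDist bQ q)) :
    (relEntropyGap aP aQ bP bQ p q : EReal) ≤
      fdiff (condSnd (jointDist pX aP)) (condSnd (jointDist pX bP)) (condSnd (jointDist qX aQ))
        (condSnd (jointDist qX bQ)) qX p :=
  le_sSup ⟨q, hq, hqX, by
    rw [outDist_condSnd_jointDist haP hp, outDist_condSnd_jointDist haQ hqX,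
      outDist_condSnd_jointDist hbP hp, outDist_condSnd_jointDist hbQ hqX, ha.klDiv_eq, hb.klDiv_eq]
    exact EReal.coe_sub _ _⟩

lemma relEntropyGap_le_sum_mul_fdiff {aP aQ : X → Y → ℝ} {bP bQ : X → Z → ℝ}
    (haP : ∀ x, IsPMF (aP x)) (haQ : ∀ x, IsPMF (aQ x)) (hbP : ∀ x, IsPMF (bP x))
    (hbQ : ∀ x, IsPMF (bQ x)) (ha : ∀ x, AbsCont (aP x) (aQ x)) (hb : ∀ x, AbsCont (bP x) (bQ x))
    {pX qX r s : X → ℝ} (hr : ∀ x, 0 ≤ r x) (hs : ∀ x, 0 ≤ s x) (hrX : AbsCont r pX)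
    (hsX : AbsCont s qX) (hrs : AbsCont r s) :
    (relEntropyGap aP aQ bP bQ r s : EReal) ≤ (∑ x, r x : ℝ) *
      fdiff (condSnd (jointDist pX aP)) (condSnd (jointDist pX bP)) (condSnd (jointDist qX aQ))
        (condSnd (jointDist qX bQ)) qX (fun x => r x / ∑ x', r x') := by
  set ρ := ∑ x, r x
  set σ := ∑ x, s x with hσ
  rcases eq_or_ne ρ 0 with hρ0 | hρ0
  · simp [relEntropyGap, relEntropy, outDist, eq_zero_of_sum_eq_zero hr hρ0, hρ0]
  have hσ0 : σ ≠ 0 := fun h =>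
    hρ0 (Finset.sum_eq_zero fun x _ => hrs x (eq_zero_of_sum_eq_zero hs h x))
  have hq : IsPMF fun x => σ⁻¹ * s x :=
    ⟨fun x => mul_nonneg (inv_nonneg.2 (Finset.sum_nonneg fun x _ => hs x)) (hs x), by
      rw [← Finset.mul_sum, ← hσ, inv_mul_cancel₀ hσ0]⟩
  have hpq := hrs.const_mul ρ⁻¹ (inv_ne_zero hσ0)
  have hle := relEntropyGap_le_fdiff (pX := pX) (fun x => (haP x).2) (fun x => (haQ x).2)
    (fun x => (hbP x).2) (fun x => (hbQ x).2) (fun x hx => mul_eq_zero_of_right ρ⁻¹ (hrX x hx)) hq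
    (fun x hx => mul_eq_zero_of_right σ⁻¹ (hsX x hx)) (hpq.outDist ha hq.1 fun x => (haQ x).1)
    (hpq.outDist hb hq.1 fun x => (hbQ x).1)
  rw [relEntropyGap_const_mul (fun x => (haP x).2) (fun x => (hbP x).2)
    (hrs.outDist ha hs fun x => (haQ x).1) (hrs.outDist hb hs fun x => (hbQ x).1)
    (inv_ne_zero hρ0) (inv_ne_zero hσ0)] at hle
  calc (relEntropyGap aP aQ bP bQ r s : EReal)
      = ρ * (ρ⁻¹ * relEntropyGap aP aQ bP bQ r s : ℝ) := by
        rw [← EReal.coe_mul, mul_inv_cancel_left₀ hρ0]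
    _ ≤ _ := by
        simp only [div_eq_inv_mul]
        exact mul_le_mul_of_nonneg_left hle (EReal.coe_nonneg.2 (Finset.sum_nonneg fun x _ => hr x))

lemma sum_relEntropyGap_le_Gexp {U : Type*} [Fintype U] {aP aQ : X → Y → ℝ} {bP bQ : X → Z → ℝ}
    (haP : ∀ x, IsPMF (aP x)) (haQ : ∀ x, IsPMF (aQ x)) (hbP : ∀ x, IsPMF (bP x))
    (hbQ : ∀ x, IsPMF (bQ x)) (ha : ∀ x, AbsCont (aP x) (aQ x)) (hb : ∀ x, AbsCont (bP x) (bQ x))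
    {pX qX : X → ℝ} (hpX : IsPMF pX) {r s : U → X → ℝ} (hr : ∀ u x, 0 ≤ r u x)
    (hs : ∀ u x, 0 ≤ s u x) (hrs : ∀ u, AbsCont (r u) (s u)) (hsX : ∀ u, AbsCont (s u) qX)
    (hsum : ∀ x, ∑ u, r u x = pX x) {R : ℝ}
    (hY : ∑ u, entropyGain aP (r u) - entropyGain aP pX ≤ R)
    (hZ : ∑ u, entropyGain bP (r u) - entropyGain bP pX ≤ R) :
    (∑ u, relEntropyGap aP aQ bP bQ (r u) (s u) : ℝ) ≤
      Gexp (jointDist pX aP) (jointDist qX aQ) (jointDist pX bP) (jointDist qX bQ) R := by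
  have hmarg : margFst (fun w : X × U => r w.2 w.1) = pX := funext hsum
  obtain ⟨κ, hκ, hjoint⟩ := exists_channel (p := fun w : X × U => r w.2 w.1)
    ⟨fun w => hr _ _, by simp only [Fintype.sum_prod_type, hsum, hpX.2]⟩
  have hκr (u : U) (x : X) : κ x u * pX x = r u x := by
    rw [← hmarg, mul_comm]
    exact congrFun hjoint (x, u)
  let e := (Fintype.equivFin U).symm
  have hrX (u : U) : AbsCont (r u) pX := fun x hx =>
    eq_zero_of_sum_eq_zero (fun u => hr u x) ((hsum x).trans hx) u
  have hκe (x : X) : IsPMF fun k => κ x (e k) :=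
    ⟨fun k => (hκ x).1 _, (e.sum_comp (κ x)).trans (hκ x).2⟩
  have hle := Finset.sum_le_sum fun k (_ : k ∈ Finset.univ) => relEntropyGap_le_sum_mul_fdiff
    haP haQ hbP hbQ ha hb (hr (e k)) (hs (e k)) (hrX (e k)) (hsX (e k)) (hrs (e k))
  rw [← e.sum_comp, ereal_coe_sum]
  refine hle.trans (le_sSup ⟨_, fun x k => κ x (e k), hκe, ?_, ?_, ?_⟩)
  · simpa only [condMI_eq_sum_entropyGain (fun x => (haP x).2) (fun x => (hκe x).2), hκr,
      e.sum_comp fun u => entropyGain aP (r u)] using hY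
  · simpa only [condMI_eq_sum_entropyGain (fun x => (hbP x).2) (fun x => (hκe x).2), hκr,
      e.sum_comp fun u => entropyGain bP (r u)] using hZ
  · simp only [margFst_jointDist fun x => (haP x).2, margFst_jointDist fun x => (haQ x).2, hκr]

lemma inv_mul_sum_relEntropyGap_le_Gexp {U : Type*} [Fintype U] {aP aQ : X → Y → ℝ}
    {bP bQ : X → Z → ℝ} (haP : ∀ x, IsPMF (aP x)) (haQ : ∀ x, IsPMF (aQ x))
    (hbP : ∀ x, IsPMF (bP x)) (hbQ : ∀ x, IsPMF (bQ x)) (ha : ∀ x, AbsCont (aP x) (aQ x))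
    (hb : ∀ x, AbsCont (bP x) (bQ x)) {pX qX : X → ℝ} (hpX : IsPMF pX) {r s : U → X → ℝ}
    (hr : ∀ u x, 0 ≤ r u x) (hs : ∀ u x, 0 ≤ s u x) (hrs : ∀ u, AbsCont (r u) (s u))
    (hsX : ∀ u, AbsCont (s u) qX) {c : ℝ} (hc : 0 < c) (hsum : ∀ x, ∑ u, r u x = c * pX x) {R : ℝ}
    (hY : ∑ u, entropyGain aP (r u) ≤ c * (entropyGain aP pX + R))
    (hZ : ∑ u, entropyGain bP (r u) ≤ c * (entropyGain bP pX + R)) :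
    (c⁻¹ * ∑ u, relEntropyGap aP aQ bP bQ (r u) (s u) : ℝ) ≤
      Gexp (jointDist pX aP) (jointDist qX aQ) (jointDist pX bP) (jointDist qX bQ) R := by
  have hc0 : c⁻¹ ≠ 0 := inv_ne_zero hc.ne'
  have hgap (u : U) := relEntropyGap_const_mul (fun x => (haP x).2) (fun x => (hbP x).2)
    ((hrs u).outDist ha (hs u) fun x => (haQ x).1) ((hrs u).outDist hb (hs u) fun x => (hbQ x).1)
    hc0 hc0
  simp only [Finset.mul_sum, ← hgap]
  refine sum_relEntropyGap_le_Gexp haP haQ hbP hbQ ha hb hpX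
    (fun u x => mul_nonneg (inv_nonneg.2 hc.le) (hr u x))
    (fun u x => mul_nonneg (inv_nonneg.2 hc.le) (hs u x)) (fun u => (hrs u).const_mul _ hc0)
    (fun u x hx => mul_eq_zero_of_right _ (hsX u x hx))
    (fun x => by rw [← Finset.mul_sum, hsum, inv_mul_cancel_left₀ hc.ne']) ?_ ?_
  · simpa only [entropyGain_const_mul fun x => (haP x).2, ← Finset.mul_sum, sub_le_iff_le_add',
      inv_mul_le_iff₀ hc] using hY
  · simpa only [entropyGain_const_mul fun x => (hbP x).2, ← Finset.mul_sum, sub_le_iff_le_add',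
      inv_mul_le_iff₀ hc] using hZ

lemma inv_mul_sum_relEntropyGap_blockChannel_le_Gexp {aP aQ : X → Y → ℝ} {bP bQ : X → Z → ℝ}
    (haP : ∀ x, IsPMF (aP x)) (haQ : ∀ x, IsPMF (aQ x)) (hbP : ∀ x, IsPMF (bP x))
    (hbQ : ∀ x, IsPMF (bQ x)) (ha : ∀ x, AbsCont (aP x) (aQ x)) (hb : ∀ x, AbsCont (bP x) (bQ x))
    {pX qX : X → ℝ} (hpX : IsPMF pX) (hqX : IsPMF qX) (hpq : AbsCont pX qX) {n : ℕ} (hn : 0 < n)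
    {κ : (Fin n → X) → M → ℝ} (hκ : ∀ x, IsPMF (κ x)) {R : ℝ}
    (hR : log (Fintype.card M) ≤ n * R) :
    ((n : ℝ)⁻¹ * ∑ m, relEntropyGap (blockChannel aP) (blockChannel aQ) (blockChannel bP)
        (blockChannel bQ) (encodedLaw pX κ m) (encodedLaw qX κ m) : ℝ) ≤
      Gexp (jointDist pX aP) (jointDist qX aQ) (jointDist pX bP) (jointDist qX bQ) R := by
  have hμ (m : M) := encodedLaw_nonneg hpX.1 (fun x => (hκ x).1) m
  have hν (m : M) := encodedLaw_nonneg hqX.1 (fun x => (hκ x).1) m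
  let r (u : M × AuxIndex Y Z n) : X → ℝ := auxLaw aP bP n (encodedLaw pX κ u.1) u.2
  let s (u : M × AuxIndex Y Z n) : X → ℝ := auxLaw aQ bQ n (encodedLaw qX κ u.1) u.2
  have hs (u : M × AuxIndex Y Z n) (x : X) : 0 ≤ s u x :=
    auxLaw_nonneg (fun x => (haQ x).1) (fun x => (hbQ x).1) (hν u.1) u.2 x
  have hrsum (x : X) : ∑ u, r u x = n * pX x :=
    (Fintype.sum_prod_type _).trans
      (sum_auxLaw_encodedLaw haP hbP hpX (fun x => (hκ x).2) x)
  have hssum (x : X) : ∑ u, s u x = n * qX x :=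
    (Fintype.sum_prod_type _).trans
      (sum_auxLaw_encodedLaw haQ hbQ hqX (fun x => (hκ x).2) x)
  have hY := (Finset.sum_le_sum fun m _ => sum_entropyGain_auxLaw_fst_le haP hbP (hμ m)).trans
    (sum_entropyGain_encodedLaw_le haP hpX hκ)
  have hZ := (Finset.sum_le_sum fun m _ => sum_entropyGain_auxLaw_snd_le haP hbP (hμ m)).trans
    (sum_entropyGain_encodedLaw_le hbP hpX hκ)
  rw [← Fintype.sum_prod_type'] at hY hZ
  simp only [relEntropyGap_blockChannel, ← Fintype.sum_prod_type']
  exact inv_mul_sum_relEntropyGap_le_Gexp (r := r) (s := s) haP haQ hbP hbQ ha hb hpX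
    (fun u => auxLaw_nonneg (fun x => (haP x).1) (fun x => (hbP x).1) (hμ u.1) u.2) hs
    (fun u => .auxLaw (fun x => (haQ x).1) (fun x => (hbQ x).1) ha hb (hν u.1)
      (hpq.encodedLaw κ u.1) u.2)
    (fun u x hx => eq_zero_of_sum_eq_zero (fun u => hs u x)
      ((hssum x).trans (mul_eq_zero_of_right _ hx)) u)
    (Nat.cast_pos.2 hn) hrsum (by linarith) (by linarith)

lemma errExp_jointDist_le {aP aQ : X → Y → ℝ} {bP bQ : X → Z → ℝ}
    (haP : ∀ x, IsPMF (aP x)) (haQ : ∀ x, IsPMF (aQ x)) (hbP : ∀ x, IsPMF (bP x))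
    (hbQ : ∀ x, IsPMF (bQ x)) (ha : ∀ x, AbsCont (aP x) (aQ x)) (hb : ∀ x, AbsCont (bP x) (bQ x))
    {pX qX : X → ℝ} (hpX : IsPMF pX) (hqX : IsPMF qX) (hpq : AbsCont pX qX) {R : ℝ} (hR : 0 ≤ R) :
    errExp (jointDist pX aP) (jointDist qX aQ) R ≤
      Gexp (jointDist pX aP) (jointDist qX aQ) (jointDist pX bP) (jointDist qX bQ) R +
        errExp (jointDist pX bP) (jointDist qX bQ) R := by
  refine sSup_le ?_
  rintro _ ⟨n, hn, κ, hκ, rfl⟩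
  have hcard : log (Fintype.card (Fin (2 ^ ⌊(n : ℝ) * R⌋₊))) ≤ n * R := by
    rw [Fintype.card_fin]
    exact log_two_pow_floor_le (by positivity)
  have hκ0 (x : Fin n → X) := (hκ x).1
  have hgap := inv_mul_sum_relEntropyGap_blockChannel_le_Gexp haP haQ hbP hbQ ha hb hpX hqX hpq hn
    hκ hcard
  refine le_trans (le_of_eq ?_) (add_le_add hgap (le_sSup ⟨n, hn, κ, hκ, rfl⟩))
  rw [klDiv_encodedLaw (fun x => (haQ x).1) ha hqX.1 hpq hκ0,
    klDiv_encodedLaw (fun x => (hbQ x).1) hb hqX.1 hpq hκ0, ← EReal.coe_mul, ← EReal.coe_mul,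
    ← EReal.coe_add, ← mul_add, ← Finset.sum_add_distrib]
  simp only [relEntropyGap, sub_add_cancel]

theorem add_and_subtract_bound_general {pXY qXY : X × Y → ℝ} {pXZ qXZ : X × Z → ℝ}
    (hpXY : IsPMF pXY) (hqXY : IsPMF qXY) (hpXZ : IsPMF pXZ) (hqXZ : IsPMF qXZ)
    (hXY : klDiv pXY qXY < ⊤) (hXZ : klDiv pXZ qXZ < ⊤) (hp : margFst pXY = margFst pXZ)
    (hq : margFst qXY = margFst qXZ) {R : ℝ} (hR : 0 ≤ R) :
    errExp pXY qXY R ≤ Gexp pXY qXY pXZ qXZ R + errExp pXZ qXZ R := by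
  have hacXY := absCont_of_klDiv_lt_top hXY
  obtain ⟨aP, aQ, haP, haQ, ha, hpa, hqa⟩ := exists_channels_absCont hpXY hqXY hacXY
  obtain ⟨bP, bQ, hbP, hbQ, hb, hpb, hqb⟩ :=
    exists_channels_absCont hpXZ hqXZ (absCont_of_klDiv_lt_top hXZ)
  have hbound := errExp_jointDist_le haP haQ hbP hbQ ha hb hpXY.margFst hqXY.margFst
    (hacXY.margFst hqXY.1) hR
  rwa [hpa, hqa, hp, hq, hpb, hqb] at hbound

end

/-- The add-and-subtract upper bound:
`E_{P_XY,Q_XY}(R) ≤ G_{P_XY,Q_XY,P_XZ,Q_XZ}(R) + E_{P_XZ,Q_XZ}(R)`. -/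
theorem add_and_subtract_bound {X Y Z : Type*} [Fintype X] [Fintype Y] [Fintype Z]
    (R : ℝ) (hR : 0 < R)
    (P Q : X × Y × Z → ℝ) (hP : IsPMF P) (hQ : IsPMF Q)
    (hXY : klDiv (pushf P (fun w => (w.1, w.2.1))) (pushf Q (fun w => (w.1, w.2.1))) < ⊤)
    (hXZ : klDiv (pushf P (fun w => (w.1, w.2.2))) (pushf Q (fun w => (w.1, w.2.2))) < ⊤) :
    errExp (pushf P (fun w => (w.1, w.2.1))) (pushf Q (fun w => (w.1, w.2.1))) R ≤
      Gexp (pushf P (fun w => (w.1, w.2.1))) (pushf Q (fun w => (w.1, w.2.1)))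
        (pushf P (fun w => (w.1, w.2.2))) (pushf Q (fun w => (w.1, w.2.2))) R
      + errExp (pushf P (fun w => (w.1, w.2.2))) (pushf Q (fun w => (w.1, w.2.2))) R := by
  exact add_and_subtract_bound_general (hP.pushf _) (hQ.pushf _) (hP.pushf _) (hQ.pushf _) hXY hXZ
    (by rw [margFst_pushf, margFst_pushf]) (by rw [margFst_pushf, margFst_pushf]) hR.le

end
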